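/- arXiv:1505.06362 — 6 statements merged into one kernel-verified Lean document; each statement's English description precedes it below -/
import Mathlib

section
/- Let F be a finite alphabet and E : Fⁿ → F^N (n, N ≥ 1) an error correcting code with relative distance 1 − μ, i.e., for all x ≠ x' in Fⁿ, |{j ∈ [N] : E(x)_j = E(x')_j}| ≤ μN. Let τ > 0 satisfy τ ≥ 2√μ, and let w : [N] → F. Then the set agr_τ(w) = {x ∈ Fⁿ : |{j ∈ [N] : E(x)_j = w_j}| ≥ τN} has cardinality at most 2/τ. -/
/-- The set of `τ`-admissible words for `w` with respect to the code `E`: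
all messages `x` whose encoding agrees with `w` on at least a `τ` fraction
of the `N` coordinates. -/
def agrSet {F : Type*} {n N : ℕ} (E : (Fin n → F) → (Fin N → F)) (τ : ℝ)
    (w : Fin N → F) : Set (Fin n → F) :=
  {x | τ * N ≤ (({j : Fin N | E x j = w j} : Set (Fin N)).ncard : ℝ)}

/-- If `E : Fⁿ → F^N` has relative distance `1 − μ` and `τ ≥ 2√μ`, `τ > 0`,
then for any word `w` the set `agr_τ(w)` of `τ`-admissible messages has
cardinality at most `2/τ`. -/
theorem stmt1 (F : Type*) [Fintype F] (n N : ℕ) (hn : 1 ≤ n) (hN : 1 ≤ N)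
    (E : (Fin n → F) → (Fin N → F)) (μ τ : ℝ) (hμ : 0 ≤ μ)
    (hdist : ∀ x x' : Fin n → F, x ≠ x' →
      (({j : Fin N | E x j = E x' j} : Set (Fin N)).ncard : ℝ) ≤ μ * N)
    (hτpos : 0 < τ) (hτ : 2 * Real.sqrt μ ≤ τ)
    (w : Fin N → F) :
    ((agrSet E τ w).ncard : ℝ) ≤ 2 / τ := by
  classical
  have hNpos : (0:ℝ) < N := by exact_mod_cast hN
  have hμτ : μ ≤ τ ^ 2 / 4 := by
    have h1 := Real.sq_sqrt hμ
    have h2 := Real.sqrt_nonneg μ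
    nlinarith
  set T : Finset (Fin n → F) := (agrSet E τ w).toFinset with hT
  have hcard : (agrSet E τ w).ncard = T.card := Set.ncard_eq_toFinset_card' _
  rw [hcard]
  let a : (Fin n → F) → Fin N → ℝ := fun x j => if E x j = w j then 1 else 0
  have hA : ∀ x ∈ T, τ * N ≤ ∑ j, a x j := by
    intro x hx
    have hx' : x ∈ agrSet E τ w := by simpa [hT] using hx
    have h : τ * N ≤ (({j : Fin N | E x j = w j} : Set (Fin N)).ncard : ℝ) := hx'
    rw [Set.ncard_eq_toFinset_card'] at h
    simpa [a, Finset.sum_boole] using h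
  have hpair : ∀ x y, x ≠ y → ∑ j, a x j * a y j ≤ μ * N := by
    intro x y hxy
    refine le_trans ?_ (hdist x y hxy)
    rw [Set.ncard_eq_toFinset_card']
    have : ∑ j, a x j * a y j ≤ ∑ j, (if E x j = E y j then (1:ℝ) else 0) := by
      apply Finset.sum_le_sum
      intro j _
      simp only [a]
      split_ifs <;> simp_all
    refine this.trans (le_of_eq ?_)
    simp [Finset.sum_boole]
  have hdiag : ∀ x, ∑ j, a x j * a x j = ∑ j, a x j := by
    intro x
    apply Finset.sum_congr rfl
    intro j _
    simp only [a]
    split_ifs <;> simp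
  set S : ℝ := ∑ j, ∑ x ∈ T, a x j with hS
  have hS' : S = ∑ x ∈ T, ∑ j, a x j := Finset.sum_comm
  have hSlow : T.card * (τ * N) ≤ S := by
    rw [hS', ← nsmul_eq_mul]
    exact Finset.card_nsmul_le_sum _ _ _ hA
  have hCS : S ^ 2 ≤ N * ∑ j, (∑ x ∈ T, a x j) ^ 2 := by
    have := sq_sum_le_card_mul_sum_sq (s := (Finset.univ : Finset (Fin N)))
      (f := fun j => ∑ x ∈ T, a x j)
    simpa using this
  have hsq : ∑ j, (∑ x ∈ T, a x j) ^ 2 = ∑ x ∈ T, ∑ y ∈ T, ∑ j, a x j * a y j := by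
    simp_rw [sq, Finset.sum_mul_sum]
    rw [Finset.sum_comm]
    apply Finset.sum_congr rfl
    intro x _
    rw [Finset.sum_comm]
  have hup : ∑ x ∈ T, ∑ y ∈ T, ∑ j, a x j * a y j ≤ S + T.card * (T.card * (μ * N)) := by
    have h : ∀ x ∈ T, ∑ y ∈ T, ∑ j, a x j * a y j ≤ ∑ j, a x j + T.card * (μ * N) := by
      intro x hx
      have h1 : ∑ y ∈ T, ∑ j, a x j * a y j
          ≤ ∑ y ∈ T, ((if x = y then ∑ j, a x j else 0) + μ * N) := by
        apply Finset.sum_le_sum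
        intro y _
        by_cases hxy : x = y
        · subst hxy
          rw [hdiag, if_pos rfl]
          have : 0 ≤ μ * N := by positivity
          linarith
        · rw [if_neg hxy, zero_add]
          exact hpair x y hxy
      refine h1.trans (le_of_eq ?_)
      rw [Finset.sum_add_distrib, Finset.sum_ite_eq, if_pos hx, Finset.sum_const, nsmul_eq_mul]
    refine (Finset.sum_le_sum h).trans (le_of_eq ?_)
    rw [Finset.sum_add_distrib, ← hS', Finset.sum_const, nsmul_eq_mul]
  rw [hsq] at hCS
  generalize (T.card : ℝ) = m at *
  rw [le_div_iff₀ hτpos]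
  by_contra! hlt
  clear_value S
  clear hS hS'
  obtain ⟨s, rfl⟩ : ∃ s, S = N * s := ⟨S / N, by field_simp⟩
  have hs : m * τ ≤ s := by
    have : N * (m * τ) ≤ N * s := by linarith
    exact le_of_mul_le_mul_left this hNpos
  have h3 : (N:ℝ) ^ 2 * s ^ 2 ≤ (N:ℝ) ^ 2 * (s + m ^ 2 * μ) := by
    have := mul_le_mul_of_nonneg_left hup hNpos.le
    nlinarith
  have h4 : s ^ 2 ≤ s + m ^ 2 * μ := le_of_mul_le_mul_left h3 (by positivity)
  have h5 : m ^ 2 * μ ≤ m ^ 2 * (τ ^ 2 / 4) := mul_le_mul_of_nonneg_left hμτ (sq_nonneg m)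
  have h6 : m ^ 2 * (τ ^ 2 / 4) = (m * τ) ^ 2 / 4 := by ring
  nlinarith
end

section
/- Let F be a finite alphabet and E : Fⁿ → F^N (n, N ≥ 1) an error correcting code with relative distance 1 − μ, i.e., for all x ≠ x' in Fⁿ, |{j ∈ [N] : E(x)_j = E(x')_j}| ≤ μN. Let τ > 0 satisfy τ ≥ 2√μ and let w : [N] → F. Call an index j ∈ [N] ambiguous for w if there exist two distinct elements x ≠ x' of agr_τ(w) with E(x)_j = w_j and E(x')_j = w_j. Then the number of ambiguous indices is at most (4μ/τ²)·N. -/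
/-- If `E : Fⁿ → F^N` has relative distance `1 − μ` and `τ ≥ 2√μ`, `τ > 0`,
then for any word `w`, the number of indices `j` that are ambiguous for `w`,
i.e. such that two distinct `τ`-admissible messages both agree with `w` at `j`,
is at most `(4μ/τ²)·N`. -/
theorem stmt2 (F : Type*) [Fintype F] (n N : ℕ) (hn : 1 ≤ n) (hN : 1 ≤ N)
    (E : (Fin n → F) → (Fin N → F)) (μ τ : ℝ) (hμ : 0 ≤ μ)
    (hdist : ∀ x x' : Fin n → F, x ≠ x' →
      (({j : Fin N | E x j = E x' j} : Set (Fin N)).ncard : ℝ) ≤ μ * N)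
    (hτpos : 0 < τ) (hτ : 2 * Real.sqrt μ ≤ τ)
    (w : Fin N → F) :
    (({j : Fin N | ∃ x x' : Fin n → F, x ≠ x' ∧
        x ∈ agrSet E τ w ∧ x' ∈ agrSet E τ w ∧
        E x j = w j ∧ E x' j = w j} : Set (Fin N)).ncard : ℝ)
      ≤ (4 * μ / τ ^ 2) * N := by
  classical
  let a : (Fin n → F) → Fin N → ℝ := fun x j => if E x j = w j then 1 else 0
  have ha0 : ∀ x j, 0 ≤ a x j := by
    intro x j; simp only [a]; split_ifs <;> norm_num
  let T : Finset (Fin n → F) := Finset.univ.filter (fun x => x ∈ agrSet E τ w)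
  let d : Fin N → ℝ := fun j => ∑ x ∈ T, a x j
  let P : Fin N → ℝ := fun j => ∑ x ∈ T, ∑ y ∈ T, if x = y then 0 else a x j * a y j
  have hNpos : (0 : ℝ) < N := by exact_mod_cast hN
  have hterm : ∀ x y j, 0 ≤ (if x = y then 0 else a x j * a y j) := by
    intro x y j
    split_ifs
    · exact le_rfl
    · exact mul_nonneg (ha0 _ _) (ha0 _ _)
  have hP0 : ∀ j, 0 ≤ P j := fun j =>
    Finset.sum_nonneg fun x _ => Finset.sum_nonneg fun y _ => hterm x y j
  have hPd : ∀ j, d j ^ 2 = P j + d j := by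
    intro j
    simp only [d, P]
    rw [sq, Finset.sum_mul_sum, ← Finset.sum_add_distrib]
    refine Finset.sum_congr rfl fun x hx => ?_
    have h1 : a x j = ∑ y ∈ T, if x = y then a x j * a y j else 0 := by
      rw [Finset.sum_ite_eq, if_pos hx]
      simp only [a]; split_ifs <;> norm_num
    conv_rhs => rw [h1]
    rw [← Finset.sum_add_distrib]
    refine Finset.sum_congr rfl fun y _ => ?_
    split_ifs with h
    · rw [zero_add]
    · rw [← h1, add_zero]
  have hsumP : ∑ j, P j ≤ (T.card : ℝ) ^ 2 * (μ * N) := by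
    have h1 : ∑ j, P j = ∑ x ∈ T, ∑ y ∈ T, ∑ j, if x = y then 0 else a x j * a y j := by
      simp only [P]
      rw [Finset.sum_comm]
      exact Finset.sum_congr rfl fun x _ => Finset.sum_comm
    have h2 : ∀ x ∈ T, ∀ y ∈ T, (∑ j, if x = y then 0 else a x j * a y j) ≤ μ * N := by
      intro x _ y _
      by_cases h : x = y
      · simp only [h, if_true, Finset.sum_const_zero]; positivity
      · refine le_trans ?_ (hdist x y h)
        rw [Set.ncard_eq_toFinset_card', Finset.card_eq_sum_ones, Nat.cast_sum,
          Set.toFinset_setOf, Finset.sum_filter]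
        refine Finset.sum_le_sum fun j _ => ?_
        simp only [a, h, if_false]
        split_ifs with h1 h2 h3 h3 <;> simp_all
    rw [h1]
    calc _ ≤ ∑ x ∈ T, ∑ y ∈ T, μ * (N : ℝ) :=
          Finset.sum_le_sum fun x hx => Finset.sum_le_sum fun y hy => h2 x hx y hy
      _ = _ := by simp only [Finset.sum_const, nsmul_eq_mul]; ring
  have hS : (T.card : ℝ) * (τ * N) ≤ ∑ j, d j := by
    simp only [d]
    rw [Finset.sum_comm, ← nsmul_eq_mul]
    refine Finset.card_nsmul_le_sum _ _ _ fun x hx => ?_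
    have h := (Finset.mem_filter.mp hx).2
    simp only [agrSet, Set.mem_setOf_eq] at h
    refine h.trans (le_of_eq ?_)
    rw [Set.ncard_eq_toFinset_card', Set.toFinset_setOf]
    simp only [a, Finset.sum_boole]
  have hCS : (∑ j, d j) ^ 2 ≤ N * ∑ j, d j ^ 2 := by
    have := sq_sum_le_card_mul_sum_sq (s := (Finset.univ : Finset (Fin N))) (f := d)
    simpa using this
  have hd2 : ∑ j, d j ^ 2 = ∑ j, P j + ∑ j, d j := by
    rw [← Finset.sum_add_distrib]
    exact Finset.sum_congr rfl fun j _ => hPd j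
  have hμτ : 4 * μ ≤ τ ^ 2 := by
    have h1 := Real.sq_sqrt hμ
    have h2 := Real.sqrt_nonneg μ
    nlinarith
  have hL : (T.card : ℝ) * τ ≤ 2 := by
    by_contra! hc
    set S := ∑ j, d j
    set L : ℝ := (T.card : ℝ)
    have hSN : 2 * N < S := by nlinarith
    have e1 : S ^ 2 ≤ N * (L ^ 2 * (μ * N) + S) := by
      rw [hd2] at hCS
      refine hCS.trans ?_
      gcongr
    have e2 : 4 * (N * (L ^ 2 * (μ * N))) ≤ S ^ 2 := by
      have e3 : (L * (τ * N)) ^ 2 ≤ S ^ 2 := by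
        have : 0 ≤ L := Nat.cast_nonneg _
        gcongr
      have e4 : (4 * μ) * (L * N) ^ 2 ≤ τ ^ 2 * (L * N) ^ 2 := by gcongr
      nlinarith
    nlinarith
  have hamb : (({j : Fin N | ∃ x x' : Fin n → F, x ≠ x' ∧
        x ∈ agrSet E τ w ∧ x' ∈ agrSet E τ w ∧
        E x j = w j ∧ E x' j = w j} : Set (Fin N)).ncard : ℝ) ≤ ∑ j, P j := by
    rw [Set.ncard_eq_toFinset_card', Finset.card_eq_sum_ones, Nat.cast_sum,
      Set.toFinset_setOf, Finset.sum_filter]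
    refine Finset.sum_le_sum fun j _ => ?_
    split_ifs with h
    · obtain ⟨x, y, hxy, hx, hy, hxj, hyj⟩ := h
      have hxT : x ∈ T := Finset.mem_filter.mpr ⟨Finset.mem_univ _, hx⟩
      have hyT : y ∈ T := Finset.mem_filter.mpr ⟨Finset.mem_univ _, hy⟩
      have h1 : (1 : ℝ) = if x = y then 0 else a x j * a y j := by
        simp [a, hxy, hxj, hyj]
      rw [Nat.cast_one, h1]
      refine (Finset.single_le_sum (f := fun y => if x = y then 0 else a x j * a y j)
        (fun y _ => hterm x y j) hyT).trans ?_
      exact Finset.single_le_sum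
        (f := fun x => ∑ y ∈ T, if x = y then 0 else a x j * a y j)
        (fun x _ => Finset.sum_nonneg fun y _ => hterm x y j) hxT
    · exact hP0 j
  refine hamb.trans (hsumP.trans ?_)
  have h4 : (T.card : ℝ) ^ 2 ≤ 4 / τ ^ 2 := by
    rw [le_div_iff₀ (by positivity)]
    have : 0 ≤ (T.card : ℝ) * τ := by positivity
    nlinarith
  calc (T.card : ℝ) ^ 2 * (μ * N) ≤ 4 / τ ^ 2 * (μ * N) := by gcongr
    _ = _ := by ring
end

section
/- (Claim 2.3) Let F be a finite alphabet and E : Fⁿ → F^N (n, N ≥ 1) an error correcting code with relative distance 1 − μ, i.e., for all x ≠ x' in Fⁿ, |{j ∈ [N] : E(x)_j = E(x')_j}| ≤ μN. Let τ > 0, let w : [N] → F, and let W : [N] → Fⁿ ∪ {⊥} be the τ-local decoding function of w with respect to E: W(j) = x if x is the unique element of agr_τ(w) with E(x)_j = w_j, and W(j) = ⊥ otherwise. Suppose v : [N] → F is a codeword, v = E(y) for some y ∈ Fⁿ. Then |{j ∈ [N] : v_j = w_j and W(j) ≠ y}| ≤ (τ + 4μ/τ²)·N. -/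
/-- Claim 2.3: if `E : Fⁿ → F^N` has relative distance `1 − μ`, `τ > 0`,
`W` is the `τ`-local decoding function of `w` (mapping `j` to the unique
`τ`-admissible message agreeing with `w` at `j`, or `⊥` if no unique such
message exists), and `v = E y` is a codeword, then the fraction of indices `j`
where `v_j = w_j` yet `W(j) ≠ y` is at most `τ + 4μ/τ²`. -/
theorem stmt3 (F : Type*) [Fintype F] (n N : ℕ) (hn : 1 ≤ n) (hN : 1 ≤ N)
    (E : (Fin n → F) → (Fin N → F)) (μ τ : ℝ) (hμ : 0 ≤ μ)
    (hdist : ∀ x x' : Fin n → F, x ≠ x' →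
      (({j : Fin N | E x j = E x' j} : Set (Fin N)).ncard : ℝ) ≤ μ * N)
    (hτpos : 0 < τ)
    (w : Fin N → F) (W : Fin N → Option (Fin n → F))
    (hW : ∀ (j : Fin N) (x : Fin n → F), W j = some x ↔
      (x ∈ agrSet E τ w ∧ E x j = w j ∧
        ∀ x' ∈ agrSet E τ w, E x' j = w j → x' = x))
    (y : Fin n → F) :
    (({j : Fin N | E y j = w j ∧ W j ≠ some y} : Set (Fin N)).ncard : ℝ)
      ≤ (τ + 4 * μ / τ ^ 2) * N := by
  classical
  have hN0 : (0 : ℝ) < N := by exact_mod_cast hN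
  have hle : ∀ S : Set (Fin N), (S.ncard : ℝ) ≤ N := by
    intro S
    have h := Set.ncard_le_ncard (Set.subset_univ S) Set.finite_univ
    rw [Set.ncard_univ, Nat.card_eq_fintype_card, Fintype.card_fin] at h
    exact_mod_cast h
  have hτ2 : 0 < τ ^ 2 := by positivity
  by_cases hbig : τ ^ 2 ≤ 4 * μ
  · have h1 : 1 ≤ 4 * μ / τ ^ 2 := by rwa [one_le_div hτ2]
    refine (hle _).trans ?_
    nlinarith
  push Not at hbig
  by_cases hy : y ∈ agrSet E τ w
  swap
  · have h1 : (({j : Fin N | E y j = w j} : Set (Fin N)).ncard : ℝ) < τ * N := by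
      simpa [agrSet] using hy
    have h2 : (({j : Fin N | E y j = w j ∧ W j ≠ some y} : Set (Fin N)).ncard : ℝ)
        ≤ (({j : Fin N | E y j = w j} : Set (Fin N)).ncard : ℝ) := by
      have hsub : {j : Fin N | E y j = w j ∧ W j ≠ some y} ⊆ {j : Fin N | E y j = w j} :=
        fun j hj => hj.1
      exact_mod_cast Set.ncard_le_ncard hsub (Set.toFinite _)
    have h3 : 0 ≤ 4 * μ / τ ^ 2 * N := by positivity
    nlinarith
  let A : Finset (Fin n → F) := Finset.univ.filter (fun x => x ∈ agrSet E τ w)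
  have hA : ∀ x, x ∈ A ↔ x ∈ agrSet E τ w := by intro x; simp [A]
  have hcard : ∀ (p : Fin N → Prop) [DecidablePred p], (({j : Fin N | p j} : Set (Fin N)).ncard : ℝ)
      = ∑ j, if p j then (1 : ℝ) else 0 := by
    intro p _
    rw [Set.ncard_eq_toFinset_card']
    simp
  let L : ℝ := A.card
  have hL0 : 0 < L := by
    have : 0 < A.card := Finset.card_pos.mpr ⟨y, (hA y).2 hy⟩
    exact Nat.cast_pos.mpr this
  -- list size bound
  let c : Fin N → ℝ := fun j => ∑ x ∈ A, if E x j = w j then (1 : ℝ) else 0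
  have hS : L * (τ * N) ≤ ∑ j, c j := by
    simp only [c]
    rw [Finset.sum_comm]
    have : ∑ x ∈ A, τ * (N : ℝ) ≤ ∑ x ∈ A, ∑ j, if E x j = w j then (1 : ℝ) else 0 := by
      refine Finset.sum_le_sum fun x hx => ?_
      rw [← hcard]
      exact (hA x).1 hx
    simpa [L] using this
  have hS2 : ∑ j, c j ^ 2 ≤ L * (N + L * (μ * N)) := by
    have e : ∑ j, c j ^ 2 = ∑ x ∈ A, ∑ x' ∈ A, ∑ j,
        (if E x j = w j then (1 : ℝ) else 0) * (if E x' j = w j then (1 : ℝ) else 0) := by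
      simp only [c, sq, Finset.sum_mul_sum]
      rw [Finset.sum_comm]
      refine Finset.sum_congr rfl fun x _ => ?_
      rw [Finset.sum_comm]
    rw [e]
    have : ∀ x ∈ A, ∑ x' ∈ A, ∑ j,
        (if E x j = w j then (1 : ℝ) else 0) * (if E x' j = w j then (1 : ℝ) else 0)
        ≤ N + L * (μ * N) := by
      intro x hx
      have h1 : ∀ x' ∈ A, ∑ j,
          (if E x j = w j then (1 : ℝ) else 0) * (if E x' j = w j then (1 : ℝ) else 0)
          ≤ (if x = x' then (N : ℝ) else 0) + μ * N := by
        intro x' _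
        have h2 : ∑ j,
            (if E x j = w j then (1 : ℝ) else 0) * (if E x' j = w j then (1 : ℝ) else 0)
            ≤ (({j : Fin N | E x j = E x' j} : Set (Fin N)).ncard : ℝ) := by
          rw [hcard]
          refine Finset.sum_le_sum fun j _ => ?_
          by_cases a : E x j = w j <;> by_cases b : E x' j = w j <;> simp [a, b] <;>
            split_ifs <;> norm_num
        refine h2.trans ?_
        split_ifs with h
        · have := hle {j : Fin N | E x j = E x' j}
          have : 0 ≤ μ * N := by positivity
          linarith
        · simpa using hdist x x' h
      refine (Finset.sum_le_sum h1).trans ?_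
      rw [Finset.sum_add_distrib]
      simp [hx, L]
    refine (Finset.sum_le_sum this).trans ?_
    rw [Finset.sum_const, nsmul_eq_mul]
  have hCS : (∑ j, c j) ^ 2 ≤ N * ∑ j, c j ^ 2 := by
    simpa using sq_sum_le_card_mul_sum_sq (s := (Finset.univ : Finset (Fin N))) (f := c)
  have hLb : L * τ ^ 2 ≤ 4 := by
    have h1 : (L * (τ * N)) ^ 2 ≤ (∑ j, c j) ^ 2 := by
      gcongr
    have h2 : (L * (τ * N)) ^ 2 ≤ N * (L * (N + L * (μ * N))) :=
      h1.trans (hCS.trans (by gcongr))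
    have h3 : (L * N ^ 2) * (L * τ ^ 2) ≤ (L * N ^ 2) * (1 + L * μ) := by nlinarith
    have h4 : L * τ ^ 2 ≤ 1 + L * μ := le_of_mul_le_mul_left h3 (by positivity)
    nlinarith
  -- union bound
  have hU : (({j : Fin N | E y j = w j ∧ W j ≠ some y} : Set (Fin N)).ncard : ℝ)
      ≤ L * (μ * N) := by
    rw [hcard]
    have h1 : ∀ j, (if E y j = w j ∧ W j ≠ some y then (1 : ℝ) else 0)
        ≤ ∑ x ∈ A, if x ≠ y ∧ E x j = E y j then (1 : ℝ) else 0 := by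
      intro j
      have hnn : ∀ x ∈ A, 0 ≤ if x ≠ y ∧ E x j = E y j then (1 : ℝ) else 0 := by
        intro x _
        split_ifs <;> norm_num
      split_ifs with h
      · obtain ⟨h1, h2⟩ := h
        have h3 : ∃ x ∈ agrSet E τ w, E x j = w j ∧ x ≠ y := by
          by_contra hc
          push Not at hc
          exact h2 ((hW j y).2 ⟨hy, h1, hc⟩)
        obtain ⟨x, hx, hxj, hxy⟩ := h3
        have h4 := Finset.single_le_sum hnn ((hA x).2 hx)
        rwa [if_pos ⟨hxy, hxj.trans h1.symm⟩] at h4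
      · exact Finset.sum_nonneg hnn
    refine (Finset.sum_le_sum fun j _ => h1 j).trans ?_
    rw [Finset.sum_comm]
    have h5 : ∀ x ∈ A, (∑ j, if x ≠ y ∧ E x j = E y j then (1 : ℝ) else 0) ≤ μ * N := by
      intro x _
      by_cases hxy : x = y
      · simp only [hxy, ne_eq, not_true_eq_false, false_and, if_false, Finset.sum_const_zero]
        positivity
      · have := hdist x y hxy
        rw [hcard] at this
        simpa only [ne_eq, hxy, not_false_eq_true, true_and] using this
    refine (Finset.sum_le_sum h5).trans ?_
    simp [L]
  have hL4 : L ≤ 4 / τ ^ 2 := by rwa [le_div_iff₀ hτ2]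
  calc _ ≤ L * (μ * N) := hU
    _ ≤ 4 / τ ^ 2 * (μ * N) := by gcongr
    _ = (4 * μ / τ ^ 2) * N := by ring
    _ ≤ _ := by gcongr; linarith
end

section
/- (Claim 2.3 with the agreement parameter of Remark 2.4) Let F be a finite alphabet and E : Fⁿ → F^N (n, N ≥ 1) an error correcting code with relative distance 1 − μ, i.e., for all x ≠ x' in Fⁿ, |{j ∈ [N] : E(x)_j = E(x')_j}| ≤ μN. Set τ = (4μ)^{1/3} and assume τ > 0. Let w : [N] → F, let W : [N] → Fⁿ ∪ {⊥} be the τ-local decoding function of w with respect to E, and suppose v = E(y) for some y ∈ Fⁿ. Then |{j ∈ [N] : v_j = w_j and W(j) ≠ y}| ≤ 2(4μ)^{1/3}·N. -/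
theorem ncard_sum {N : ℕ} (p : Fin N → Prop) [DecidablePred p] :
    (({j : Fin N | p j} : Set (Fin N)).ncard : ℝ) = ∑ j, if p j then (1 : ℝ) else 0 := by
  rw [Set.ncard_eq_toFinset_card']
  simp

/-- List size bound. -/
theorem list_bound {X : Type*} [DecidableEq X] {N : ℕ} (hN : (0 : ℝ) < N) (S : Finset X)
    (a : X → Fin N → ℝ) (ha0 : ∀ x j, 0 ≤ a x j) (ha : ∀ x j, a x j * a x j = a x j)
    (τ μ : ℝ) (hτ : 0 < τ) (hτ2 : τ ≤ 2) (hμ : 0 ≤ μ) (h3 : τ ^ 3 = 4 * μ)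
    (h1 : ∀ x ∈ S, τ * N ≤ ∑ j, a x j)
    (h2 : ∀ x x', x ≠ x' → ∑ j, a x j * a x' j ≤ μ * N) :
    (S.card : ℝ) * τ ≤ 2 := by
  set D : ℝ := ∑ j, ∑ x ∈ S, a x j with hD
  have hDc : D = ∑ x ∈ S, ∑ j, a x j := Finset.sum_comm
  have hlow : (S.card : ℝ) * (τ * N) ≤ D := by
    rw [hDc, ← nsmul_eq_mul]
    exact Finset.card_nsmul_le_sum _ _ _ h1
  have hsq : ∑ j, (∑ x ∈ S, a x j) ^ 2 ≤ D + (S.card : ℝ) ^ 2 * (μ * N) := by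
    have e : ∑ j, (∑ x ∈ S, a x j) ^ 2 = ∑ x ∈ S, ∑ x' ∈ S, ∑ j, a x j * a x' j := by
      simp_rw [sq, Finset.sum_mul_sum]
      rw [Finset.sum_comm]
      refine Finset.sum_congr rfl fun x _ => ?_
      rw [Finset.sum_comm]
    rw [e]
    have : ∀ x ∈ S, ∑ x' ∈ S, ∑ j, a x j * a x' j ≤ ∑ j, a x j + S.card * (μ * N) := by
      intro x hx
      calc ∑ x' ∈ S, ∑ j, a x j * a x' j
          ≤ ∑ x' ∈ S, ((if x = x' then ∑ j, a x j else 0) + μ * N) := by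
            refine Finset.sum_le_sum fun x' _ => ?_
            by_cases h : x = x'
            · subst h
              simp only [ha, if_true]
              nlinarith
            · simpa [h] using h2 x x' h
        _ = _ := by
            rw [Finset.sum_add_distrib, Finset.sum_ite_eq]
            simp [hx]
    refine (Finset.sum_le_sum this).trans (le_of_eq ?_)
    rw [Finset.sum_add_distrib, ← hDc]
    simp
    ring
  have hcs : D ^ 2 ≤ N * ∑ j, (∑ x ∈ S, a x j) ^ 2 := by
    have := sq_sum_le_card_mul_sum_sq (s := (Finset.univ : Finset (Fin N)))
      (f := fun j => ∑ x ∈ S, a x j)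
    simpa using this
  obtain ⟨s, hs⟩ : ∃ s : ℝ, D = s * N := ⟨D / N, by field_simp⟩
  have hls : (S.card : ℝ) * τ ≤ s := by
    rw [hs] at hlow
    refine le_of_mul_le_mul_right ?_ hN
    linarith
  have hL : (0 : ℝ) ≤ S.card := by positivity
  set L : ℝ := (S.card : ℝ)
  have k1 : s ^ 2 ≤ s + L ^ 2 * μ := by
    have : D ^ 2 ≤ N * (D + L ^ 2 * (μ * N)) := hcs.trans (by gcongr)
    rw [hs] at this
    refine le_of_mul_le_mul_right ?_ (by positivity : (0 : ℝ) < N ^ 2)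
    linarith
  have k2 : (L * τ) ^ 2 ≤ s ^ 2 := by
    have : 0 ≤ L * τ := by positivity
    gcongr
  have k3 : L ^ 2 * μ = (L * τ) ^ 2 * (τ / 4) := by
    have : μ = τ ^ 3 / 4 := by linarith
    rw [this]
    ring
  have k4 : (L * τ) ^ 2 * (τ / 4) ≤ s ^ 2 * (1 / 2) := by
    have : τ / 4 ≤ 1 / 2 := by linarith
    gcongr
  by_contra hc
  have : 2 < s := by linarith
  nlinarith

/-- Claim 2.3 with the agreement parameter of Remark 2.4: with `τ = (4μ)^{1/3} > 0`
and `W` the `τ`-local decoding function of `w` with respect to a code `E` of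
relative distance `1 − μ`, for every codeword `v = E y` the number of indices `j`
with `v_j = w_j` and `W(j) ≠ y` is at most `2(4μ)^{1/3}·N`. -/
theorem stmt4 (F : Type*) [Fintype F] (n N : ℕ) (hn : 1 ≤ n) (hN : 1 ≤ N)
    (E : (Fin n → F) → (Fin N → F)) (μ : ℝ) (hμ : 0 ≤ μ)
    (hdist : ∀ x x' : Fin n → F, x ≠ x' →
      (({j : Fin N | E x j = E x' j} : Set (Fin N)).ncard : ℝ) ≤ μ * N)
    (hτpos : 0 < (4 * μ) ^ ((1 : ℝ) / 3))
    (w : Fin N → F) (W : Fin N → Option (Fin n → F))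
    (hW : ∀ (j : Fin N) (x : Fin n → F), W j = some x ↔
      (x ∈ agrSet E ((4 * μ) ^ ((1 : ℝ) / 3)) w ∧ E x j = w j ∧
        ∀ x' ∈ agrSet E ((4 * μ) ^ ((1 : ℝ) / 3)) w, E x' j = w j → x' = x))
    (y : Fin n → F) :
    (({j : Fin N | E y j = w j ∧ W j ≠ some y} : Set (Fin N)).ncard : ℝ)
      ≤ 2 * (4 * μ) ^ ((1 : ℝ) / 3) * N := by
  classical
  have hN' : (0 : ℝ) < N := by exact_mod_cast hN
  have h3 : ((4 * μ) ^ ((1 : ℝ) / 3)) ^ 3 = 4 * μ := by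
    rw [← Real.rpow_natCast, ← Real.rpow_mul (by linarith)]
    norm_num
  generalize (4 * μ) ^ ((1 : ℝ) / 3) = τ at *
  by_cases hy : y ∈ agrSet E τ w
  swap
  · have h : (({j : Fin N | E y j = w j} : Set (Fin N)).ncard : ℝ) < τ * N := by
      simpa [agrSet] using hy
    have h' : ({j : Fin N | E y j = w j ∧ W j ≠ some y} : Set (Fin N)).ncard ≤
        ({j : Fin N | E y j = w j} : Set (Fin N)).ncard :=
      Set.ncard_le_ncard (fun j hj => hj.1) (Set.toFinite _)
    have h'' : (({j : Fin N | E y j = w j ∧ W j ≠ some y} : Set (Fin N)).ncard : ℝ) ≤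
        ({j : Fin N | E y j = w j} : Set (Fin N)).ncard := by exact_mod_cast h'
    nlinarith
  by_cases hbig : 2 < τ
  · have h' : ({j : Fin N | E y j = w j ∧ W j ≠ some y} : Set (Fin N)).ncard ≤ N := by
      simpa using Set.ncard_le_card ({j : Fin N | E y j = w j ∧ W j ≠ some y} : Set (Fin N))
    have h'' : (({j : Fin N | E y j = w j ∧ W j ≠ some y} : Set (Fin N)).ncard : ℝ) ≤ N := by
      exact_mod_cast h'
    nlinarith
  push Not at hbig
  set S : Finset (Fin n → F) := (Set.toFinite (agrSet E τ w)).toFinset with hS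
  have hSm : ∀ x, x ∈ S ↔ x ∈ agrSet E τ w := by simp [hS]
  have hL := list_bound hN' S (fun x j => if E x j = w j then (1 : ℝ) else 0)
    (fun x j => by positivity) (fun x j => by simp) τ μ hτpos hbig hμ h3
    (fun x hx => by
      rw [← ncard_sum]
      exact (hSm x).1 hx)
    (fun x x' hne => by
      refine le_trans ?_ (hdist x x' hne)
      rw [ncard_sum]
      refine Finset.sum_le_sum fun j _ => ?_
      by_cases h1 : E x j = w j <;> by_cases h2 : E x' j = w j <;> simp [h1, h2] <;>
      split_ifs <;> norm_num)
  have hsub : ({j : Fin N | E y j = w j ∧ W j ≠ some y} : Set (Fin N)) ⊆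
      ⋃ x ∈ S.erase y, {j : Fin N | E x j = E y j} := by
    rintro j ⟨h1, h2⟩
    rw [Ne, hW] at h2
    push Not at h2
    obtain ⟨x, hx, hxj, hne⟩ := h2 hy h1
    simp only [Set.mem_iUnion]
    exact ⟨x, Finset.mem_erase.2 ⟨hne, (hSm x).2 hx⟩, hxj.trans h1.symm⟩
  have hc : ({j : Fin N | E y j = w j ∧ W j ≠ some y} : Set (Fin N)).ncard ≤
      ∑ x ∈ S.erase y, ({j : Fin N | E x j = E y j} : Set (Fin N)).ncard :=
    (Set.ncard_le_ncard hsub (Set.toFinite _)).trans (Finset.set_ncard_biUnion_le _ _)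
  have hc' : (({j : Fin N | E y j = w j ∧ W j ≠ some y} : Set (Fin N)).ncard : ℝ) ≤
      ∑ x ∈ S.erase y, (({j : Fin N | E x j = E y j} : Set (Fin N)).ncard : ℝ) := by
    exact_mod_cast hc
  have hc2 : ∑ x ∈ S.erase y, (({j : Fin N | E x j = E y j} : Set (Fin N)).ncard : ℝ) ≤
      (S.erase y).card * (μ * N) := by
    rw [← nsmul_eq_mul]
    exact Finset.sum_le_card_nsmul _ _ _ fun x hx => hdist x y (Finset.ne_of_mem_erase hx)
  have hc3 : ((S.erase y).card : ℝ) ≤ S.card := by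
    exact_mod_cast Finset.card_le_card (Finset.erase_subset _ _)
  have hc4 : (S.card : ℝ) * μ ≤ 2 * τ := by
    have : μ = τ ^ 3 / 4 := by linarith
    have e : (S.card : ℝ) * μ = (S.card * τ) * (τ ^ 2 / 4) := by rw [this]; ring
    have : (S.card * τ) * (τ ^ 2 / 4) ≤ 2 * (τ ^ 2 / 4) := by gcongr
    nlinarith
  calc _ ≤ _ := hc'
    _ ≤ _ := hc2
    _ ≤ S.card * (μ * N) := by gcongr
    _ = (S.card * μ) * N := by ring
    _ ≤ _ := by gcongr
end

section
/- Let F be a field, let H ⊆ F be a finite nonempty subset, and let m be a natural number. For every function f : H^m → F there exists a unique polynomial g in m variables over F whose degree in each variable is strictly less than |H| and whose evaluation agrees with f at every point of H^m. -/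
/-- Existence and uniqueness of multivariate interpolation over the grid `H^m`:
for every `f : H^m → F` there is a unique polynomial `g` in `m` variables over `F`
of degree `< |H|` in each variable whose evaluation agrees with `f` on `H^m`. -/
theorem stmt5 (F : Type*) [Field F] (H : Finset F) (hH : H.Nonempty) (m : ℕ)
    (f : (Fin m → H) → F) :
    ∃! g : MvPolynomial (Fin m) F,
      (∀ i : Fin m, g.degreeOf i < H.card) ∧
      ∀ x : Fin m → H, MvPolynomial.eval (fun i => (x i : F)) g = f x := by
  classical
  have hpos : 0 < H.card := hH.card_pos
  refine existsUnique_of_exists_of_unique ?_ ?_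
  · refine ⟨∑ a : Fin m → H, MvPolynomial.C (f a) * ∏ i : Fin m,
      ∏ h ∈ H.erase (a i : F), (MvPolynomial.C (((a i : F) - h)⁻¹) *
        (MvPolynomial.X i - MvPolynomial.C h)), ?_, ?_⟩
    · intro j
      refine lt_of_le_of_lt (MvPolynomial.degreeOf_sum_le _ _ _) ?_
      rw [Finset.sup_lt_iff (by simpa using hpos)]
      intro a _
      refine lt_of_le_of_lt (MvPolynomial.degreeOf_C_mul_le _ _ _) ?_
      refine lt_of_le_of_lt (MvPolynomial.degreeOf_prod_le _ _ _) ?_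
      have hb : ∀ i ∈ (Finset.univ : Finset (Fin m)),
          MvPolynomial.degreeOf j (∏ h ∈ H.erase (a i : F),
            (MvPolynomial.C (((a i : F) - h)⁻¹) *
            (MvPolynomial.X i - MvPolynomial.C h))) ≤ if i = j then H.card - 1 else 0 := by
        intro i _
        refine (MvPolynomial.degreeOf_prod_le _ _ _).trans ?_
        have hc : ∀ h ∈ H.erase (a i : F), MvPolynomial.degreeOf j
            (MvPolynomial.C (((a i : F) - h)⁻¹) *
            (MvPolynomial.X i - MvPolynomial.C h)) ≤ if i = j then 1 else 0 := by
          intro h _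
          refine (MvPolynomial.degreeOf_C_mul_le _ _ _).trans ?_
          refine (MvPolynomial.degreeOf_sub_le _ _ _).trans ?_
          rw [MvPolynomial.degreeOf_C, MvPolynomial.degreeOf_X]
          simp [eq_comm]
        refine (Finset.sum_le_sum hc).trans ?_
        rw [Finset.sum_const, Finset.card_erase_of_mem (a i).2]
        split_ifs <;> simp
      refine lt_of_le_of_lt (Finset.sum_le_sum hb) ?_
      simp [hpos]
    · intro x
      rw [map_sum, Finset.sum_eq_single x]
      · simp only [map_mul, map_prod, map_sub, MvPolynomial.eval_C, MvPolynomial.eval_X]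
        rw [Finset.prod_eq_one, mul_one]
        intro i _
        refine Finset.prod_eq_one fun h hh => inv_mul_cancel₀ ?_
        exact sub_ne_zero.2 (Finset.ne_of_mem_erase hh).symm
      · intro a _ hax
        obtain ⟨i, hi⟩ := Function.ne_iff.1 hax
        simp only [map_mul, map_prod, map_sub, MvPolynomial.eval_C, MvPolynomial.eval_X]
        rw [Finset.prod_eq_zero (Finset.mem_univ i), mul_zero]
        refine Finset.prod_eq_zero (i := (x i : F)) ?_ (by simp)
        exact Finset.mem_erase.2 ⟨fun h => hi (Subtype.ext h.symm), (x i).2⟩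
      · simp
  · rintro p q ⟨hp, hp'⟩ ⟨hq, hq'⟩
    refine sub_eq_zero.1 (MvPolynomial.eq_zero_of_eval_zero_at_prod_finset (p - q)
      (fun _ => H) ?_ ?_)
    · intro i
      exact lt_of_le_of_lt (MvPolynomial.degreeOf_sub_le _ _ _) (max_lt (hp i) (hq i))
    · intro x hx
      have h1 := hp' fun i => ⟨x i, hx i⟩
      have h2 := hq' fun i => ⟨x i, hx i⟩
      rw [map_sub, sub_eq_zero]
      exact h1.trans h2.symm
end

section
/- (Core of Lemma 5.12, sumcheck soundness) Let F be a finite field, H ⊆ F a finite subset, m ≥ 1 and d ≥ 0. Let f : F^m → F and s₁, …, s_m : F^m → F be evaluations of m-variate polynomials over F, each of total degree at most d. Suppose Σ_{x∈H^m} f(x) ≠ 0 and Σ_{h∈H} s₁(h,0,…,0) = 0. Then the number of points x = (x₁,…,x_m) ∈ F^m satisfying simultaneously (a) s_m(x) = f(x), and (b) for every i with 2 ≤ i ≤ m, s_{i−1}(x₁,…,x_{i−1},0,…,0) = Σ_{h∈H} s_i(x₁,…,x_{i−1},h,0,…,0), is at most m·d·|F|^{m−1}. -/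
theorem aux_deg {F : Type*} [Field F] {m d : ℕ} (p : MvPolynomial (Fin m) F)
    (hp : p.totalDegree ≤ d) (g : Fin m → MvPolynomial (Fin m) F)
    (hg : ∀ i, (g i).totalDegree ≤ 1) : (MvPolynomial.bind₁ g p).totalDegree ≤ d := by
  rw [p.as_sum, map_sum]
  apply MvPolynomial.totalDegree_finsetSum_le
  intro v hv
  rw [MvPolynomial.bind₁_monomial]
  refine (MvPolynomial.totalDegree_mul _ _).trans ?_
  rw [MvPolynomial.totalDegree_C, zero_add]
  refine (MvPolynomial.totalDegree_finsetProd _ _).trans ?_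
  refine le_trans ?_ ((MvPolynomial.le_totalDegree hv).trans hp)
  rw [Finsupp.sum]
  apply Finset.sum_le_sum
  intro i _
  refine (MvPolynomial.totalDegree_pow _ _).trans ?_
  exact (Nat.mul_le_mul_left _ (hg i)).trans (by simp)

theorem aux_eval {F : Type*} [Field F] {m : ℕ} (p : MvPolynomial (Fin m) F)
    (g : Fin m → MvPolynomial (Fin m) F) (x : Fin m → F) :
    MvPolynomial.eval x (MvPolynomial.bind₁ g p) =
      MvPolynomial.eval (fun i => MvPolynomial.eval x (g i)) p :=
  MvPolynomial.eval₂Hom_bind₁ _ _ _ _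

theorem aux_sz {F : Type*} [Field F] [Fintype F] {m d : ℕ} (hm : 1 ≤ m)
    (q : MvPolynomial (Fin m) F) (hq : q.totalDegree ≤ d) (x₀ : Fin m → F)
    (hx : MvPolynomial.eval x₀ q ≠ 0) (S : Set (Fin m → F))
    (hS : ∀ x ∈ S, MvPolynomial.eval x q = 0) :
    S.ncard ≤ m * d * Fintype.card F ^ (m - 1) := by
  classical
  have hq0 : q ≠ 0 := by rintro rfl; simp at hx
  have h := MvPolynomial.schwartz_zippel_totalDegree hq0 (Finset.univ : Finset F)
  set Z := Finset.filter (fun f => MvPolynomial.eval f q = 0)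
    (Fintype.piFinset fun _ : Fin m => (Finset.univ : Finset F)) with hZ
  have h1 : S.ncard ≤ Z.card := by
    rw [← Set.ncard_coe_finset]
    apply Set.ncard_le_ncard _ (Finset.finite_toSet _)
    intro x hxS
    simp [hZ, hS x hxS]
  have hc : 0 < Fintype.card F := Fintype.card_pos
  have h2 : Z.card ≤ q.totalDegree * Fintype.card F ^ (m - 1) := by
    obtain ⟨k, rfl⟩ : ∃ k, m = k + 1 := ⟨m - 1, by omega⟩
    rw [Finset.card_univ] at h
    have hc' : (0 : ℚ≥0) < Fintype.card F := by exact_mod_cast hc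
    rw [div_le_div_iff₀ (by positivity) hc', pow_succ, ← mul_assoc] at h
    have := le_of_mul_le_mul_right h hc'
    rw [Nat.add_sub_cancel]
    exact_mod_cast this
  refine h1.trans (h2.trans (Nat.mul_le_mul_right _ (hq.trans ?_)))
  exact Nat.le_mul_of_pos_left _ hm

theorem aux_step {F : Type*} [Field F] (H : Finset F) {m : ℕ} (j : ℕ) (hj : j + 1 < m)
    (g : (Fin m → F) → F) :
    ∑ x ∈ Fintype.piFinset (fun t : Fin m => if (t : ℕ) ≤ j + 1 then H else {0}), g x =
    ∑ x ∈ Fintype.piFinset (fun t : Fin m => if (t : ℕ) ≤ j then H else {0}), ∑ h ∈ H,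
      g (fun t : Fin m => if (t : ℕ) ≤ j then x t else if (t : ℕ) = j + 1 then h else 0) := by
  classical
  have key : ∀ x ∈ Fintype.piFinset (fun t : Fin m => if (t : ℕ) ≤ j + 1 then H else {0}),
      (fun t : Fin m => if (t : ℕ) ≤ j then (if (t : ℕ) ≤ j then x t else 0) else
        if (t : ℕ) = j + 1 then x ⟨j + 1, hj⟩ else 0) = x := by
    intro x hx
    rw [Fintype.mem_piFinset] at hx
    funext t
    have := hx t
    by_cases ht : (t : ℕ) ≤ j
    · simp [ht]
    · by_cases ht' : (t : ℕ) = j + 1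
      · have : t = ⟨j + 1, hj⟩ := Fin.ext ht'
        subst this
        simp
      · have h3 : ¬ (t : ℕ) ≤ j + 1 := by omega
        simp only [h3, if_false, Finset.mem_singleton] at this
        simp [ht, ht', this]
  rw [← Finset.sum_product']
  refine Finset.sum_bij' (fun x _ => (fun t => if (t : ℕ) ≤ j then x t else 0, x ⟨j + 1, hj⟩))
    (fun y _ => fun t => if (t : ℕ) ≤ j then y.1 t else if (t : ℕ) = j + 1 then y.2 else 0)
    ?_ ?_ ?_ ?_ ?_
  · intro x hx
    rw [Fintype.mem_piFinset] at hx
    rw [Finset.mem_product, Fintype.mem_piFinset]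
    refine ⟨fun t => ?_, by simpa using hx ⟨j + 1, hj⟩⟩
    have := hx t
    by_cases ht : (t : ℕ) ≤ j
    · simpa [ht, Nat.le_succ_of_le ht] using this
    · simp [ht]
  · rintro ⟨y, h⟩ hy
    rw [Finset.mem_product, Fintype.mem_piFinset] at hy
    rw [Fintype.mem_piFinset]
    intro t
    have := hy.1 t
    by_cases ht : (t : ℕ) ≤ j
    · simpa [ht, Nat.le_succ_of_le ht] using this
    · by_cases ht' : (t : ℕ) = j + 1
      · simpa [ht'] using hy.2
      · have : ¬ (t : ℕ) ≤ j + 1 := by omega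
        simp [ht, ht', this]
  · intro x hx
    exact key x hx
  · rintro ⟨y, h⟩ hy
    rw [Finset.mem_product, Fintype.mem_piFinset] at hy
    refine Prod.ext ?_ (by simp)
    funext t
    have := hy.1 t
    by_cases ht : (t : ℕ) ≤ j
    · simp [ht]
    · simp only [ht, if_false, Finset.mem_singleton] at this
      simp [ht, this]
  · intro x hx
    exact congrArg g (key x hx).symm

theorem aux_base {F : Type*} [Field F] (H : Finset F) {m : ℕ} (hm : 0 < m)
    (g : (Fin m → F) → F) :
    ∑ x ∈ Fintype.piFinset (fun t : Fin m => if (t : ℕ) ≤ 0 then H else {0}), g x =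
    ∑ h ∈ H, g (fun t : Fin m => if (t : ℕ) = 0 then h else 0) := by
  classical
  have key : ∀ x ∈ Fintype.piFinset (fun t : Fin m => if (t : ℕ) ≤ 0 then H else {0}),
      (fun t : Fin m => if (t : ℕ) = 0 then x ⟨0, hm⟩ else 0) = x := by
    intro x hx
    rw [Fintype.mem_piFinset] at hx
    funext t
    have := hx t
    by_cases ht : (t : ℕ) = 0
    · have : t = ⟨0, hm⟩ := Fin.ext ht
      subst this
      simp
    · have h3 : ¬ (t : ℕ) ≤ 0 := by omega
      simp only [h3, if_false, Finset.mem_singleton] at this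
      simp [ht, this]
  refine Finset.sum_bij' (fun x _ => x ⟨0, hm⟩)
    (fun h _ => fun t => if (t : ℕ) = 0 then h else 0) ?_ ?_ key ?_ ?_
  · intro x hx
    rw [Fintype.mem_piFinset] at hx
    simpa using hx ⟨0, hm⟩
  · intro h hh
    rw [Fintype.mem_piFinset]
    intro t
    by_cases ht : (t : ℕ) = 0 <;> simp [ht, hh]
  · intro h hh
    simp
  · intro x hx
    exact congrArg g (key x hx).symm

/-- Core of Lemma 5.12 (sumcheck soundness): let `f` and `s₁, …, s_m` (here
`s ⟨k⟩` is `s_{k+1}`, 0-based) be `m`-variate polynomials over a finite field `F`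
of total degree at most `d`. If `Σ_{x∈H^m} f(x) ≠ 0` while
`Σ_{h∈H} s₁(h,0,…,0) = 0`, then the number of points `x ∈ F^m` at which all the
sumcheck tests pass, namely `s_m(x) = f(x)` and
`s_{i−1}(x₁,…,x_{i−1},0,…,0) = Σ_{h∈H} s_i(x₁,…,x_{i−1},h,0,…,0)` for every
`2 ≤ i ≤ m`, is at most `m·d·|F|^{m−1}`. -/
theorem stmt8 (F : Type*) [Field F] [Fintype F] (H : Finset F) (m d : ℕ)
    (hm : 1 ≤ m)
    (f : MvPolynomial (Fin m) F) (s : Fin m → MvPolynomial (Fin m) F)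
    (hf : f.totalDegree ≤ d) (hs : ∀ i, (s i).totalDegree ≤ d)
    (hsum : ∑ x ∈ Fintype.piFinset (fun _ : Fin m => H),
      MvPolynomial.eval x f ≠ 0)
    (hzero : ∑ h ∈ H, MvPolynomial.eval
      (fun t : Fin m => if (t : ℕ) = 0 then h else 0) (s ⟨0, by omega⟩) = 0) :
    ({x : Fin m → F |
        MvPolynomial.eval x (s ⟨m - 1, by omega⟩) = MvPolynomial.eval x f ∧
        ∀ (j : ℕ) (hj : j + 1 < m),
          MvPolynomial.eval (fun t : Fin m => if (t : ℕ) ≤ j then x t else 0)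
              (s ⟨j, by omega⟩) =
            ∑ h ∈ H, MvPolynomial.eval
              (fun t : Fin m => if (t : ℕ) ≤ j then x t else if (t : ℕ) = j + 1 then h else 0)
              (s ⟨j + 1, hj⟩)} : Set (Fin m → F)).ncard
      ≤ m * d * Fintype.card F ^ (m - 1) := by
  classical
  by_cases hA : ∃ x, MvPolynomial.eval x (s ⟨m - 1, by omega⟩) ≠ MvPolynomial.eval x f
  · obtain ⟨x₀, hx₀⟩ := hA
    refine aux_sz hm (s ⟨m - 1, by omega⟩ - f)
      ((MvPolynomial.totalDegree_sub _ _).trans (max_le (hs _) hf)) x₀ ?_ _ ?_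
    · rw [map_sub]
      exact sub_ne_zero.mpr hx₀
    · rintro x ⟨hx, -⟩
      rw [map_sub, hx, sub_self]
  push Not at hA
  by_cases hB : ∃ (j : ℕ) (hj : j + 1 < m) (x : Fin m → F),
      MvPolynomial.eval (fun t : Fin m => if (t : ℕ) ≤ j then x t else 0)
          (s ⟨j, by omega⟩) ≠
        ∑ h ∈ H, MvPolynomial.eval
          (fun t : Fin m => if (t : ℕ) ≤ j then x t else if (t : ℕ) = j + 1 then h else 0)
          (s ⟨j + 1, hj⟩)
  · obtain ⟨j, hj, x₀, hx₀⟩ := hB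
    let q : MvPolynomial (Fin m) F :=
      MvPolynomial.bind₁ (fun t : Fin m => if (t : ℕ) ≤ j then MvPolynomial.X t else 0)
          (s ⟨j, by omega⟩) -
        ∑ h ∈ H, MvPolynomial.bind₁ (fun t : Fin m => if (t : ℕ) ≤ j then MvPolynomial.X t
          else if (t : ℕ) = j + 1 then MvPolynomial.C h else 0) (s ⟨j + 1, hj⟩)
    have hqe : ∀ x, MvPolynomial.eval x q =
        MvPolynomial.eval (fun t : Fin m => if (t : ℕ) ≤ j then x t else 0)
          (s ⟨j, by omega⟩) -
        ∑ h ∈ H, MvPolynomial.eval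
          (fun t : Fin m => if (t : ℕ) ≤ j then x t else if (t : ℕ) = j + 1 then h else 0)
          (s ⟨j + 1, hj⟩) := by
      intro x
      simp only [q, map_sub, map_sum, aux_eval, apply_ite (MvPolynomial.eval x),
        MvPolynomial.eval_X, MvPolynomial.eval_C, map_zero]
    have hqd : q.totalDegree ≤ d := by
      refine (MvPolynomial.totalDegree_sub _ _).trans (max_le ?_ ?_)
      · apply aux_deg _ (hs _)
        intro i
        split_ifs <;> simp
      · apply MvPolynomial.totalDegree_finsetSum_le
        intro h _
        apply aux_deg _ (hs _)
        intro i
        split_ifs <;> simp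
    refine aux_sz hm q hqd x₀ ?_ _ ?_
    · rw [hqe]
      exact sub_ne_zero.mpr hx₀
    · rintro x ⟨-, hx⟩
      rw [hqe, hx j hj, sub_self]
  push Not at hB
  exfalso
  have main : ∀ (j : ℕ) (hj : j < m),
      ∑ x ∈ Fintype.piFinset (fun t : Fin m => if (t : ℕ) ≤ j then H else {0}),
        MvPolynomial.eval x (s ⟨j, hj⟩) = 0 := by
    intro j
    induction j with
    | zero =>
      intro hj
      rw [aux_base H hj (fun x => MvPolynomial.eval x (s ⟨0, hj⟩))]
      exact hzero
    | succ j ih =>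
      intro hj
      rw [aux_step H j hj (fun x => MvPolynomial.eval x (s ⟨j + 1, hj⟩))]
      refine Eq.trans ?_ (ih (by omega))
      apply Finset.sum_congr rfl
      intro x hx
      rw [← hB j hj x]
      congr 1
      rw [Fintype.mem_piFinset] at hx
      congr 1
      funext t
      have := hx t
      by_cases ht : (t : ℕ) ≤ j
      · simp [ht]
      · simp only [ht, if_false, Finset.mem_singleton] at this
        simp [this]
  apply hsum
  refine Eq.trans ?_ (main (m - 1) (by omega))
  have : (fun t : Fin m => if (t : ℕ) ≤ m - 1 then H else {0}) = fun _ => H := by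
    funext t
    rw [if_pos (by omega)]
  rw [this]
  exact Finset.sum_congr rfl fun x _ => (hA x).symm
end
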